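/- arXiv:1811.01354 — 2 statements merged into one kernel-verified Lean document; each statement's English description precedes it below -/
import Mathlib

section
/- Fix a real R. Let Q₀ be a probability mass function on 𝒳, and suppose that for every ℓ ≥ 0 the pair (T̆_ℓ,V̆_ℓ) attains the minimum defining E_c^{ML}(R,Q_ℓ) and Q_{ℓ+1}(x) = ∑_y T̆_ℓ(y)V̆_ℓ(x|y). If E_c^{ML}(R,Q₀) < inf over probability mass functions Q with C(supp(Q)) < R of E_c^{ML}(R,Q) (the infimum over an empty set being +∞), then the non-increasing sequence E_c^{ML}(R,Q_ℓ) converges to 0 as ℓ → ∞. -/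
/-!
For a joint law `j` with output marginal `T`, the objective of `EcML R Q P` equals
`max (D(j‖Q∘P)) (R + ∑ j log (T/P))` (`objective_eq`). Both entries are convex in `j`, the second
does not involve `Q`, and the first is minimized over `Q` by the input marginal of `j`
(`divR_marginal_le`). Hence the recursion is an alternating minimization and the exponents `eₗ`
decrease.

For convergence, the supports of the `Qₗ` decrease, hence are eventually constant. By the
hypothesis on `Q₀` and monotonicity, the final support has capacity at least `R`. If all
`eₗ ≥ ε > 0`, choose `S` on that support with `MI S P > R - ε`. Moving from the minimizer `jₗ`
towards `S∘P` brings the second entry strictly below `eₗ`, by convexity and because it equals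
`R - MI S P` at `S∘P`. Minimality therefore forces `D(jₜ‖Qₗ∘P) ≥ eₗ` along the whole segment.
Comparing with the chord (`divR_segment_le`) and letting `t → 0` gives
`∑ S log Qₗ₊₁ - ∑ S log Qₗ ≥ eₗ ≥ ε` (`potential_step`). This is impossible for all large `ℓ`,
since `∑ S log Qₗ ≤ 0`.
-/

open scoped BigOperators
open Filter Topology

/-- `f` is a probability mass function on a finite alphabet. -/
def IsPMF {α : Type*} [Fintype α] (f : α → ℝ) : Prop :=
  (∀ a, 0 ≤ f a) ∧ ∑ a, f a = 1

/-- `P` is a discrete memoryless channel from `𝓧` to `𝓨`. -/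
def IsChannel {𝓧 𝓨 : Type*} [Fintype 𝓧] [Fintype 𝓨] (P : 𝓧 → 𝓨 → ℝ) : Prop :=
  ∀ x, IsPMF (P x)

/-- `V` is a conditional pmf on `𝓧` given `𝓨`. -/
def IsCondPMF {𝓧 𝓨 : Type*} [Fintype 𝓧] [Fintype 𝓨] (V : 𝓨 → 𝓧 → ℝ) : Prop :=
  ∀ y, IsPMF (V y)

/-- one term `s·log(s/t)` of a KL divergence, with the conventions
    `0·log(0/t) = 0` and `s·log(s/0) = +∞` for `s > 0`. -/
noncomputable def klTerm (s t : ℝ) : EReal :=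
  if s = 0 then 0 else if t = 0 then ⊤ else ((s * Real.log (s / t) : ℝ) : EReal)

/-- `D(T∘V ‖ Q∘P)`. -/
noncomputable def DQP {𝓧 𝓨 : Type*} [Fintype 𝓧] [Fintype 𝓨]
    (T : 𝓨 → ℝ) (V : 𝓨 → 𝓧 → ℝ) (Q : 𝓧 → ℝ) (P : 𝓧 → 𝓨 → ℝ) : EReal :=
  ∑ y, ∑ x, klTerm (T y * V y x) (Q x * P x y)

/-- `D(T∘V ‖ T×Q)`. -/
noncomputable def DTQ {𝓧 𝓨 : Type*} [Fintype 𝓧] [Fintype 𝓨]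
    (T : 𝓨 → ℝ) (V : 𝓨 → 𝓧 → ℝ) (Q : 𝓧 → ℝ) : EReal :=
  ∑ y, ∑ x, klTerm (T y * V y x) (T y * Q x)

/-- Gallager's function `E₀(ρ,Q)` (for `ρ > −1`). -/
noncomputable def E0 {𝓧 𝓨 : Type*} [Fintype 𝓧] [Fintype 𝓨]
    (ρ : ℝ) (Q : 𝓧 → ℝ) (P : 𝓧 → 𝓨 → ℝ) : ℝ :=
  - Real.log (∑ y, (∑ x, Q x * P x y ^ (1 / (1 + ρ))) ^ (1 + ρ))

/-- The joint distribution `T_ρ∘V_ρ` on `𝓧 × 𝓨` (for `ρ > −1`). -/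
noncomputable def Jrho {𝓧 𝓨 : Type*} [Fintype 𝓧] [Fintype 𝓨]
    (ρ : ℝ) (Q : 𝓧 → ℝ) (P : 𝓧 → 𝓨 → ℝ) (x : 𝓧) (y : 𝓨) : ℝ :=
  Q x * P x y ^ (1 / (1 + ρ)) * (∑ a, Q a * P a y ^ (1 / (1 + ρ))) ^ ρ /
    ∑ y', (∑ a, Q a * P a y' ^ (1 / (1 + ρ))) ^ (1 + ρ)

/-- `max_{x : Q(x) > 0} P(y|x)`. -/
noncomputable def maxP {𝓧 𝓨 : Type*} (Q : 𝓧 → ℝ) (P : 𝓧 → 𝓨 → ℝ) (y : 𝓨) : ℝ :=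
  ⨆ x : {x // 0 < Q x}, P x.1 y

/-- `E₀(−1,Q) = −log ∑_y max_{x : Q(x)>0} P(y|x)`. -/
noncomputable def E0m1 {𝓧 𝓨 : Type*} [Fintype 𝓧] [Fintype 𝓨]
    (Q : 𝓧 → ℝ) (P : 𝓧 → 𝓨 → ℝ) : ℝ :=
  - Real.log (∑ y, maxP Q P y)

/-- `E₀(ρ,Q)` extended to `ρ = −1`. -/
noncomputable def E0full {𝓧 𝓨 : Type*} [Fintype 𝓧] [Fintype 𝓨]
    (ρ : ℝ) (Q : 𝓧 → ℝ) (P : 𝓧 → 𝓨 → ℝ) : ℝ :=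
  if ρ = -1 then E0m1 Q P else E0 ρ Q P

/-- `T_{−1}(y) ∝ max_{a : Q(a)>0} P(y|a)`. -/
noncomputable def Tm1 {𝓧 𝓨 : Type*} [Fintype 𝓧] [Fintype 𝓨]
    (Q : 𝓧 → ℝ) (P : 𝓧 → 𝓨 → ℝ) (y : 𝓨) : ℝ :=
  maxP Q P y / ∑ y', maxP Q P y'

/-- `V` is admissible at `ρ = −1`: `V(x|y) = 0` for every `x` outside
    `argmax_{a : Q(a)>0} P(y|a)`. -/
def AdmissibleAtM1 {𝓧 𝓨 : Type*} [Fintype 𝓧] [Fintype 𝓨]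
    (Q : 𝓧 → ℝ) (P : 𝓧 → 𝓨 → ℝ) (V : 𝓨 → 𝓧 → ℝ) : Prop :=
  ∀ y x, ¬ (0 < Q x ∧ ∀ a, 0 < Q a → P a y ≤ P x y) → V y x = 0

/-- the error exponent `E_e(R,Q)`. -/
noncomputable def Ee {𝓧 𝓨 : Type*} [Fintype 𝓧] [Fintype 𝓨]
    (R : ℝ) (Q : 𝓧 → ℝ) (P : 𝓧 → 𝓨 → ℝ) : EReal :=
  sInf {v | ∃ T : 𝓨 → ℝ, ∃ V : 𝓨 → 𝓧 → ℝ, IsPMF T ∧ IsCondPMF V ∧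
    v = DQP T V Q P + max (DTQ T V Q - (R : EReal)) 0}

/-- the ML correct-decoding exponent `E_c^{ML}(R,Q)`. -/
noncomputable def EcML {𝓧 𝓨 : Type*} [Fintype 𝓧] [Fintype 𝓨]
    (R : ℝ) (Q : 𝓧 → ℝ) (P : 𝓧 → 𝓨 → ℝ) : EReal :=
  sInf {v | ∃ T : 𝓨 → ℝ, ∃ V : 𝓨 → 𝓧 → ℝ, IsPMF T ∧ IsCondPMF V ∧
    v = DQP T V Q P + max ((R : EReal) - DTQ T V Q) 0}

/-- the strict correct-decoding exponent `E_c(R,Q)` (`+∞` if infeasible). -/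
noncomputable def Ec {𝓧 𝓨 : Type*} [Fintype 𝓧] [Fintype 𝓨]
    (R : ℝ) (Q : 𝓧 → ℝ) (P : 𝓧 → 𝓨 → ℝ) : EReal :=
  sInf {v | ∃ T : 𝓨 → ℝ, ∃ V : 𝓨 → 𝓧 → ℝ, IsPMF T ∧ IsCondPMF V ∧
    (R : EReal) ≤ DTQ T V Q ∧ v = DQP T V Q P}

/-- the mutual information `I(Q∘P)`. -/
noncomputable def MI {𝓧 𝓨 : Type*} [Fintype 𝓧] [Fintype 𝓨]
    (Q : 𝓧 → ℝ) (P : 𝓧 → 𝓨 → ℝ) : ℝ :=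
  ∑ x, ∑ y, if Q x * P x y = 0 then 0
    else Q x * P x y * Real.log (P x y / ∑ a, Q a * P a y)

/-- the capacity `C(Z)` of the channel restricted to input letters in `Z`. -/
noncomputable def capacity {𝓧 𝓨 : Type*} [Fintype 𝓧] [Fintype 𝓨]
    (P : 𝓧 → 𝓨 → ℝ) (Z : Set 𝓧) : ℝ :=
  sSup {c | ∃ Q' : 𝓧 → ℝ, IsPMF Q' ∧ (∀ x, 0 < Q' x → x ∈ Z) ∧ c = MI Q' P}

/-- `R_{−1}^{−}(Q)`. -/
noncomputable def Rm1minus {𝓧 𝓨 : Type*} [Fintype 𝓧] [Fintype 𝓨]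
    (Q : 𝓧 → ℝ) (P : 𝓧 → 𝓨 → ℝ) : EReal :=
  sInf {v | ∃ V : 𝓨 → 𝓧 → ℝ, IsCondPMF V ∧ AdmissibleAtM1 Q P V ∧
    v = DTQ (Tm1 Q P) V Q}

/-- `R_{−1}^{+}(Q)`. -/
noncomputable def Rm1plus {𝓧 𝓨 : Type*} [Fintype 𝓧] [Fintype 𝓨]
    (Q : 𝓧 → ℝ) (P : 𝓧 → 𝓨 → ℝ) : EReal :=
  sSup {v | ∃ V : 𝓨 → 𝓧 → ℝ, IsCondPMF V ∧ AdmissibleAtM1 Q P V ∧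
    v = DTQ (Tm1 Q P) V Q}

/-- `F_ρ(T∘V, Q) = D(T∘V‖Q∘P) + ρ·D(T∘V‖T×Q)`. -/
noncomputable def Frho {𝓧 𝓨 : Type*} [Fintype 𝓧] [Fintype 𝓨]
    (ρ : ℝ) (T : 𝓨 → ℝ) (V : 𝓨 → 𝓧 → ℝ) (Q : 𝓧 → ℝ) (P : 𝓧 → 𝓨 → ℝ) : EReal :=
  DQP T V Q P + (ρ : EReal) * DTQ T V Q

/-- the unconstrained penalized minimum
    `min_{T,V} { D(T∘V‖Q∘P) + ρ·(D(T∘V‖T×Q) − R) }`. -/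
noncomputable def penMin {𝓧 𝓨 : Type*} [Fintype 𝓧] [Fintype 𝓨]
    (Q : 𝓧 → ℝ) (P : 𝓧 → 𝓨 → ℝ) (R ρ : ℝ) : EReal :=
  sInf {v | ∃ T : 𝓨 → ℝ, ∃ V : 𝓨 → 𝓧 → ℝ, IsPMF T ∧ IsCondPMF V ∧
    v = DQP T V Q P + (ρ : EReal) * (DTQ T V Q - (R : EReal))}

/-- the support-constrained penalized minimum
    `min_{T,V : supp(V) ⊆ supp(Q)} { D(T∘V‖Q∘P) − ρ·(R − D(T∘V‖T×Q)) }`. -/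
noncomputable def penMinS {𝓧 𝓨 : Type*} [Fintype 𝓧] [Fintype 𝓨]
    (Q : 𝓧 → ℝ) (P : 𝓧 → 𝓨 → ℝ) (R ρ : ℝ) : EReal :=
  sInf {v | ∃ T : 𝓨 → ℝ, ∃ V : 𝓨 → 𝓧 → ℝ, IsPMF T ∧ IsCondPMF V ∧
    (∀ y x, Q x = 0 → V y x = 0) ∧
    v = DQP T V Q P - (ρ : EReal) * ((R : EReal) - DTQ T V Q)}

/-- `D(j‖Q∘P)` as a real number, for a joint distribution `j y x`; it agrees with the extended
divergence only when `j` is absolutely continuous with respect to `Q∘P`. -/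
noncomputable def divR {𝓧 𝓨 : Type*} [Fintype 𝓧] [Fintype 𝓨]
    (j : 𝓨 → 𝓧 → ℝ) (Q : 𝓧 → ℝ) (P : 𝓧 → 𝓨 → ℝ) : ℝ :=
  ∑ y, ∑ x, j y x * Real.log (j y x / (Q x * P x y))

/-- `R + ∑ j log (T/P)`, where `T` is the output marginal of `j`: the value of
`D(j‖Q∘P) + R − D(j‖T×Q)`, which does not depend on `Q`. -/
noncomputable def linR {𝓧 𝓨 : Type*} [Fintype 𝓧] [Fintype 𝓨]
    (R : ℝ) (T : 𝓨 → ℝ) (j : 𝓨 → 𝓧 → ℝ) (P : 𝓧 → 𝓨 → ℝ) : ℝ :=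
  R + ∑ y, T y * Real.log (T y) - ∑ y, ∑ x, j y x * Real.log (P x y)

/-! ### Extended-real bookkeeping -/

lemma klTerm_eq_coe {s t : ℝ} (h : t = 0 → s = 0) :
    klTerm s t = ((s * Real.log (s / t) : ℝ) : EReal) := by
  unfold klTerm
  by_cases hs : s = 0
  · simp [hs]
  · have ht : t ≠ 0 := fun h' => hs (h h')
    simp [hs, ht]

lemma klTerm_ne_bot (s t : ℝ) : klTerm s t ≠ ⊥ := by
  unfold klTerm
  split_ifs
  · simp
  · simp
  · exact EReal.coe_ne_bot _

lemma ereal_sum_ne_bot {ι : Type*} (s : Finset ι) (f : ι → EReal) (h : ∀ i ∈ s, f i ≠ ⊥) :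
    ∑ i ∈ s, f i ≠ ⊥ := by
  classical
  induction s using Finset.induction_on with
  | empty => simp
  | insert a s ha ih =>
    rw [Finset.sum_insert ha]
    refine EReal.add_ne_bot_iff.2 ⟨h a (by simp), ih fun i hi => h i (by simp [hi])⟩

lemma ereal_ne_top_of_sum {ι : Type*} (s : Finset ι) (f : ι → EReal) (h : ∀ i ∈ s, f i ≠ ⊥)
    (hs : ∑ i ∈ s, f i ≠ ⊤) : ∀ i ∈ s, f i ≠ ⊤ := by
  classical
  intro i hi hti
  apply hs
  rw [← Finset.add_sum_erase s f hi, hti]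
  exact EReal.top_add_of_ne_bot
    (ereal_sum_ne_bot _ _ fun k hk => h k (Finset.mem_of_mem_erase hk))

lemma ereal_coe_sum {ι : Type*} (s : Finset ι) (f : ι → ℝ) :
    ((∑ i ∈ s, f i : ℝ) : EReal) = ∑ i ∈ s, (f i : EReal) := by
  classical
  induction s using Finset.induction_on with
  | empty => simp
  | insert a s ha ih => rw [Finset.sum_insert ha, Finset.sum_insert ha, EReal.coe_add, ih]

section
variable {𝓧 𝓨 : Type*} [Fintype 𝓧] [Fintype 𝓨]

lemma ac_of_DQP_ne_top {T : 𝓨 → ℝ} {V : 𝓨 → 𝓧 → ℝ} {Q : 𝓧 → ℝ} {P : 𝓧 → 𝓨 → ℝ}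
    (h : DQP T V Q P ≠ ⊤) (y : 𝓨) (x : 𝓧) (h0 : Q x * P x y = 0) : T y * V y x = 0 := by
  have h1 := ereal_ne_top_of_sum Finset.univ _
    (fun y _ => ereal_sum_ne_bot _ _ fun x _ => klTerm_ne_bot _ _) h y (Finset.mem_univ _)
  have h2 := ereal_ne_top_of_sum Finset.univ _
    (fun x _ => klTerm_ne_bot _ _) h1 x (Finset.mem_univ _)
  by_contra hne
  exact h2 (by simp [klTerm, hne, h0])

/-- The objective of `EcML` is the larger of `divR` and `linR`. -/
lemma objective_eq {T : 𝓨 → ℝ} {V : 𝓨 → 𝓧 → ℝ} {Q : 𝓧 → ℝ} {P : 𝓧 → 𝓨 → ℝ} (R : ℝ)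
    (hV : IsCondPMF V)
    (hac : ∀ y x, Q x * P x y = 0 → T y * V y x = 0) :
    DQP T V Q P + max ((R : EReal) - DTQ T V Q) 0 =
      ((max (divR (fun y x => T y * V y x) Q P)
        (linR R T (fun y x => T y * V y x) P) : ℝ) : EReal) := by
  have h1 : DQP T V Q P = ((divR (fun y x => T y * V y x) Q P : ℝ) : EReal) := by
    unfold DQP divR
    simp only [ereal_coe_sum]
    exact Finset.sum_congr rfl fun y _ => Finset.sum_congr rfl fun x _ =>
      klTerm_eq_coe (hac y x)
  have h2 : DTQ T V Q = ((∑ y, ∑ x, T y * V y x *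
      Real.log (T y * V y x / (T y * Q x)) : ℝ) : EReal) := by
    unfold DTQ
    simp only [ereal_coe_sum]
    refine Finset.sum_congr rfl fun y _ => Finset.sum_congr rfl fun x _ =>
      klTerm_eq_coe fun h => ?_
    rcases mul_eq_zero.1 h with h | h
    · simp [h]
    · exact hac y x (by simp [h])
  have h3 : linR R T (fun y x => T y * V y x) P = divR (fun y x => T y * V y x) Q P + R
      - ∑ y, ∑ x, T y * V y x * Real.log (T y * V y x / (T y * Q x)) := by
    have hT : ∑ y, T y * Real.log (T y) = ∑ y, ∑ x, T y * V y x * Real.log (T y) := by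
      refine Finset.sum_congr rfl fun y _ => ?_
      rw [← Finset.sum_mul, ← Finset.mul_sum, (hV y).2, mul_one]
    unfold linR divR
    rw [hT]
    have : ∀ y x, T y * V y x * Real.log (T y) - T y * V y x * Real.log (P x y) =
        T y * V y x * Real.log (T y * V y x / (Q x * P x y))
        - T y * V y x * Real.log (T y * V y x / (T y * Q x)) := by
      intro y x
      by_cases hj : T y * V y x = 0
      · simp [hj]
      · have hq := mt (hac y x) hj
        have hQ := left_ne_zero_of_mul hq
        have hPx := right_ne_zero_of_mul hq
        have hT0 := left_ne_zero_of_mul hj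
        rw [Real.log_div hj hq, Real.log_div hj (mul_ne_zero hT0 hQ),
          Real.log_mul hQ hPx, Real.log_mul hT0 hQ]
        ring
    have h4 : ∑ y, ∑ x, (T y * V y x * Real.log (T y) - T y * V y x * Real.log (P x y)) =
        ∑ y, ∑ x, (T y * V y x * Real.log (T y * V y x / (Q x * P x y))
        - T y * V y x * Real.log (T y * V y x / (T y * Q x))) :=
      Finset.sum_congr rfl fun y _ => Finset.sum_congr rfl fun x _ => this y x
    simp only [Finset.sum_sub_distrib] at h4
    linarith
  rw [h1, h2, h3, ← EReal.coe_sub, ← EReal.coe_zero, ← EReal.coe_strictMono.monotone.map_max,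
    ← EReal.coe_add]
  congr 1
  rw [← max_add_add_left, max_comm]
  congr 1 <;> ring

/-! ### Gibbs' inequality and the monotonicity of one step -/

/-- Termwise Gibbs inequality, from `log z ≤ z - 1`. -/
lemma mul_log_div_le {p q : ℝ} (hp : 0 ≤ p) (hq : 0 ≤ q) (h : q = 0 → p = 0) :
    p * Real.log (q / p) ≤ q - p := by
  rcases hp.eq_or_lt with rfl | hp
  · simpa using hq
  · have hq' : 0 < q := lt_of_le_of_ne hq fun h' => hp.ne' (h h'.symm)
    have := Real.log_le_sub_one_of_pos (div_pos hq' hp)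
    calc p * Real.log (q / p) ≤ p * (q / p - 1) := by gcongr
      _ = q - p := by field_simp

lemma IsPMF.marginal {T : 𝓨 → ℝ} {V : 𝓨 → 𝓧 → ℝ} (hT : IsPMF T) (hV : IsCondPMF V) :
    IsPMF (fun x => ∑ y, T y * V y x) := by
  refine ⟨fun x => Finset.sum_nonneg fun y _ => mul_nonneg (hT.1 y) ((hV y).1 x), ?_⟩
  rw [Finset.sum_comm]
  simp only [← Finset.mul_sum, (hV _).2, mul_one, hT.2]

lemma divR_nonneg {j : 𝓨 → 𝓧 → ℝ} {Q : 𝓧 → ℝ} {P : 𝓧 → 𝓨 → ℝ} (hP : IsChannel P)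
    (hQ : IsPMF Q) (hj : ∀ y x, 0 ≤ j y x) (hj1 : ∑ y, ∑ x, j y x = 1)
    (hac : ∀ y x, Q x * P x y = 0 → j y x = 0) : 0 ≤ divR j Q P := by
  have h : ∀ y x, j y x - Q x * P x y ≤ j y x * Real.log (j y x / (Q x * P x y)) := by
    intro y x
    have := mul_log_div_le (hj y x) (mul_nonneg (hQ.1 x) ((hP x).1 y)) (hac y x)
    rw [← inv_div, Real.log_inv] at this
    linarith
  have h1 : ∑ y, ∑ x, Q x * P x y = 1 := by
    rw [Finset.sum_comm]
    simp only [← Finset.mul_sum, (hP _).2, mul_one, hQ.2]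
  have h2 : ∑ y, ∑ x, (j y x - Q x * P x y) ≤ divR j Q P :=
    Finset.sum_le_sum fun y _ => Finset.sum_le_sum fun x _ => h y x
  simp only [Finset.sum_sub_distrib] at h2
  linarith

/-- Among all input distributions, the input marginal of `j` minimizes `D(j‖Q∘P)`. -/
lemma divR_marginal_le {j : 𝓨 → 𝓧 → ℝ} {Q Q' : 𝓧 → ℝ} {P : 𝓧 → 𝓨 → ℝ}
    (hQ : IsPMF Q) (hQ' : IsPMF Q') (hj : ∀ y x, 0 ≤ j y x) (hm : ∀ x, Q' x = ∑ y, j y x)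
    (hac : ∀ y x, Q x * P x y = 0 → j y x = 0) : divR j Q' P ≤ divR j Q P := by
  have hpos : ∀ y x, j y x ≠ 0 → Q' x ≠ 0 := by
    intro y x hne h0
    rw [hm x] at h0
    exact hne ((Finset.sum_eq_zero_iff_of_nonneg fun y _ => hj y x).1 h0 y (Finset.mem_univ _))
  have hterm : ∀ y x, j y x * Real.log (j y x / (Q' x * P x y)) =
      j y x * Real.log (j y x / (Q x * P x y)) + j y x * Real.log (Q x / Q' x) := by
    intro y x
    by_cases hne : j y x = 0
    · simp [hne]
    · have hq := mt (hac y x) hne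
      have hQx := left_ne_zero_of_mul hq
      have hPx := right_ne_zero_of_mul hq
      have hQ'x := hpos y x hne
      rw [Real.log_div hne hq, Real.log_div hne (mul_ne_zero hQ'x hPx), Real.log_mul hQx hPx,
        Real.log_mul hQ'x hPx, Real.log_div hQx hQ'x]
      ring
  have hsum : divR j Q' P = divR j Q P + ∑ x, Q' x * Real.log (Q x / Q' x) := by
    have : ∑ x, Q' x * Real.log (Q x / Q' x) = ∑ y, ∑ x, j y x * Real.log (Q x / Q' x) := by
      rw [Finset.sum_comm]
      exact Finset.sum_congr rfl fun x _ => by rw [← Finset.sum_mul, ← hm x]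
    rw [this]
    unfold divR
    simp only [hterm, Finset.sum_add_distrib]
  have h0 : ∀ x, Q x = 0 → Q' x = 0 := by
    intro x hx
    rw [hm x]
    exact Finset.sum_eq_zero fun y _ => hac y x (by simp [hx])
  have : ∑ x, Q' x * Real.log (Q x / Q' x) ≤ ∑ x, (Q x - Q' x) :=
    Finset.sum_le_sum fun x _ => mul_log_div_le (hQ'.1 x) (hQ.1 x) (h0 x)
  rw [Finset.sum_sub_distrib, hQ.2, hQ'.2] at this
  linarith

/-! ### The decrease of the potential -/

/-- At the joint law of a channel with its input, `linR` is `R` minus the mutual information. -/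
lemma linR_channel (R : ℝ) {Q : 𝓧 → ℝ} {P : 𝓧 → 𝓨 → ℝ} (hP : IsChannel P) (hQ : IsPMF Q) :
    linR R (fun y => ∑ a, Q a * P a y) (fun y x => Q x * P x y) P = R - MI Q P := by
  have h : MI Q P = ∑ y, ∑ x, (Q x * P x y * Real.log (P x y)
      - Q x * P x y * Real.log (∑ a, Q a * P a y)) := by
    unfold MI
    rw [Finset.sum_comm]
    refine Finset.sum_congr rfl fun y _ => Finset.sum_congr rfl fun x _ => ?_
    split_ifs with h0
    · simp [h0]
    · have hT : ∑ a, Q a * P a y ≠ 0 := fun hz => h0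
        ((Finset.sum_eq_zero_iff_of_nonneg fun a _ => mul_nonneg (hQ.1 a) ((hP a).1 y)).1 hz x
          (Finset.mem_univ _))
      rw [Real.log_div (right_ne_zero_of_mul h0) hT]
      ring
  rw [h]
  unfold linR
  simp only [Finset.sum_sub_distrib, Finset.sum_mul]
  ring

lemma linR_convex (R : ℝ) {T T' : 𝓨 → ℝ} (j j' : 𝓨 → 𝓧 → ℝ) (P : 𝓧 → 𝓨 → ℝ)
    (hT : ∀ y, 0 ≤ T y) (hT' : ∀ y, 0 ≤ T' y) {t : ℝ} (ht : 0 ≤ t) (ht1 : t ≤ 1) :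
    linR R (fun y => (1 - t) * T y + t * T' y) (fun y x => (1 - t) * j y x + t * j' y x) P ≤
      (1 - t) * linR R T j P + t * linR R T' j' P := by
  have h : ∑ y, ((1 - t) * T y + t * T' y) * Real.log ((1 - t) * T y + t * T' y) ≤
      ∑ y, ((1 - t) * (T y * Real.log (T y)) + t * (T' y * Real.log (T' y))) :=
    Finset.sum_le_sum fun y _ => by
      simpa using Real.convexOn_mul_log.2 (hT y) (hT' y) (sub_nonneg.2 ht1) ht
        (sub_add_cancel 1 t)
  unfold linR
  simp only [Finset.sum_add_distrib, add_mul, mul_assoc, ← Finset.mul_sum] at h ⊢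
  linarith

/-- Along the segment from `j` to `S∘P`, the divergence lies below the chord by at least
`t · D(S‖Qₜ)`, where `Qₜ` is the input marginal of the point at parameter `t`. -/
lemma divR_segment_le {j : 𝓨 → 𝓧 → ℝ} {Q Q' S : 𝓧 → ℝ} {P : 𝓧 → 𝓨 → ℝ}
    (hP : IsChannel P) (hS : IsPMF S) (hQ' : IsPMF Q')
    (hj : ∀ y x, 0 ≤ j y x) (hm : ∀ x, Q' x = ∑ y, j y x)
    (hac : ∀ y x, Q x * P x y = 0 → j y x = 0) (hSQ : ∀ x, Q x = 0 → S x = 0)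
    {t : ℝ} (ht : 0 < t) (ht1 : t < 1) :
    divR (fun y x => (1 - t) * j y x + t * (S x * P x y)) Q P ≤
      (1 - t) * divR j Q P + t * ∑ x, S x * Real.log (((1 - t) * Q' x + t * S x) / Q x) := by
  set J : 𝓨 → 𝓧 → ℝ := fun y x => (1 - t) * j y x + t * (S x * P x y) with hJ
  set Qt : 𝓧 → ℝ := fun x => (1 - t) * Q' x + t * S x with hQt
  have h1t : 0 < 1 - t := by linarith
  have hk : ∀ y x, 0 ≤ S x * P x y := fun y x => mul_nonneg (hS.1 x) ((hP x).1 y)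
  have hJ0 : ∀ y x, 0 ≤ J y x := fun y x =>
    add_nonneg (mul_nonneg h1t.le (hj y x)) (mul_nonneg ht.le (hk y x))
  have hJQt : ∀ x, ∑ y, J y x = Qt x := by
    intro x
    simp only [hJ, hQt, Finset.sum_add_distrib, ← Finset.mul_sum, ← hm x, (hP x).2, mul_one]
  have hterm : ∀ y x, J y x * Real.log (J y x / (Q x * P x y)) ≤
      (1 - t) * (j y x * Real.log (j y x / (Q x * P x y)) + (J y x - j y x)) +
      t * (S x * P x y * Real.log (Qt x / Q x) + (S x / Qt x * J y x - S x * P x y)) := by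
    intro y x
    have e1 : j y x * Real.log (J y x / (Q x * P x y)) ≤
        j y x * Real.log (j y x / (Q x * P x y)) + (J y x - j y x) := by
      by_cases hne : j y x = 0
      · simpa [hne] using hJ0 y x
      · have hq := mt (hac y x) hne
        have hjp : 0 < j y x := lt_of_le_of_ne (hj y x) (Ne.symm hne)
        have hJp : 0 < J y x := add_pos_of_pos_of_nonneg (mul_pos h1t hjp)
          (mul_nonneg ht.le (hk y x))
        have := mul_log_div_le (hj y x) (hJ0 y x) fun h => absurd h hJp.ne'
        rw [Real.log_div hJp.ne' hne] at this
        rw [Real.log_div hJp.ne' hq, Real.log_div hne hq]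
        linarith
    have e2 : S x * P x y * Real.log (J y x / (Q x * P x y)) ≤
        S x * P x y * Real.log (Qt x / Q x) + (S x / Qt x * J y x - S x * P x y) := by
      by_cases hne : S x * P x y = 0
      · have : 0 ≤ S x / Qt x * J y x := mul_nonneg (div_nonneg (hS.1 x)
          (add_nonneg (mul_nonneg h1t.le (hQ'.1 x)) (mul_nonneg ht.le (hS.1 x)))) (hJ0 y x)
        simpa [hne] using this
      · have hSx := left_ne_zero_of_mul hne
        have hPx := right_ne_zero_of_mul hne
        have hQx : Q x ≠ 0 := mt (hSQ x) hSx
        have hSp : 0 < S x := lt_of_le_of_ne (hS.1 x) (Ne.symm hSx)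
        have hkp : 0 < S x * P x y := lt_of_le_of_ne (hk y x) (Ne.symm hne)
        have hQtp : 0 < Qt x := add_pos_of_nonneg_of_pos (mul_nonneg h1t.le (hQ'.1 x))
          (mul_pos ht hSp)
        have hJp : 0 < J y x := add_pos_of_nonneg_of_pos (mul_nonneg h1t.le (hj y x))
          (mul_pos ht hkp)
        have hq : 0 < S x / Qt x * J y x := by positivity
        have := mul_log_div_le (hk y x) hq.le fun h => absurd h hq.ne'
        rw [Real.log_div hq.ne' hne, Real.log_mul (div_pos hSp hQtp).ne' hJp.ne',
          Real.log_div hSx hQtp.ne', Real.log_mul hSx hPx] at this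
        rw [Real.log_div hJp.ne' (mul_ne_zero hQx hPx), Real.log_div hQtp.ne' hQx,
          Real.log_mul hQx hPx]
        linarith
    have := add_le_add (mul_le_mul_of_nonneg_left e1 h1t.le)
      (mul_le_mul_of_nonneg_left e2 ht.le)
    refine le_trans (le_of_eq ?_) this
    simp only [hJ]
    ring
  have hs1 : ∑ y, ∑ x, (J y x - j y x) = 0 := by
    rw [Finset.sum_comm]
    simp only [Finset.sum_sub_distrib, hJQt, ← hm, hQ'.2, hQt, Finset.sum_add_distrib,
      ← Finset.mul_sum, hS.2]
    ring
  have hs2 : ∑ y, ∑ x, (S x / Qt x * J y x - S x * P x y) = 0 := by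
    rw [Finset.sum_comm]
    refine Finset.sum_eq_zero fun x _ => ?_
    rw [Finset.sum_sub_distrib, ← Finset.mul_sum, ← Finset.mul_sum, hJQt, (hP x).2, mul_one,
      sub_eq_zero]
    by_cases hz : Qt x = 0
    · have : t * S x = 0 := by
        have h1 := mul_nonneg h1t.le (hQ'.1 x)
        have h2 := mul_nonneg ht.le (hS.1 x)
        simp only [hQt] at hz
        linarith
      rcases mul_eq_zero.1 this with h | h
      · exact absurd h ht.ne'
      · simp [h]
    · exact div_mul_cancel₀ _ hz
  have hs3 : ∑ y, ∑ x, S x * P x y * Real.log (Qt x / Q x) =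
      ∑ x, S x * Real.log (Qt x / Q x) := by
    rw [Finset.sum_comm]
    refine Finset.sum_congr rfl fun x _ => ?_
    rw [← Finset.sum_mul, ← Finset.mul_sum, (hP x).2, mul_one]
  have htot : divR J Q P ≤ ∑ y, ∑ x,
      ((1 - t) * (j y x * Real.log (j y x / (Q x * P x y)) + (J y x - j y x)) +
      t * (S x * P x y * Real.log (Qt x / Q x) + (S x / Qt x * J y x - S x * P x y))) :=
    Finset.sum_le_sum fun y _ => Finset.sum_le_sum fun x _ => hterm y x
  rw [← hs3]
  refine htot.trans (le_of_eq ?_)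
  simp only [Finset.sum_add_distrib, ← Finset.mul_sum]
  rw [hs1, hs2]
  unfold divR
  ring

/-- One step raises the potential `∑ S log Q` by at least the current exponent `e`, for every
input distribution `S` supported in the new support with mutual information above `R - e`. -/
lemma potential_step {P : 𝓧 → 𝓨 → ℝ} (hP : IsChannel P) {R e : ℝ} {Q Q' S : 𝓧 → ℝ}
    {T : 𝓨 → ℝ} {V : 𝓨 → 𝓧 → ℝ} (hT : IsPMF T) (hV : IsCondPMF V)
    (hm : ∀ x, Q' x = ∑ y, T y * V y x)
    (hac : ∀ y x, Q x * P x y = 0 → T y * V y x = 0)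
    (hA : divR (fun y x => T y * V y x) Q P ≤ e)
    (hB : linR R T (fun y x => T y * V y x) P ≤ e)
    (hmin : (e : EReal) ≤ EcML R Q P)
    (hS : IsPMF S) (hSQ' : ∀ x, Q' x = 0 → S x = 0) (hMI : R - MI S P < e) :
    e ≤ ∑ x, S x * Real.log (Q' x) - ∑ x, S x * Real.log (Q x) := by
  have hj : ∀ y x, 0 ≤ T y * V y x := fun y x => mul_nonneg (hT.1 y) ((hV y).1 x)
  have hQ' : IsPMF Q' := by
    have h := hT.marginal hV
    rwa [← funext hm] at h
  have hSQ : ∀ x, Q x = 0 → S x = 0 := fun x hx => hSQ' x <| by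
    rw [hm x]
    exact Finset.sum_eq_zero fun y _ => hac y x (by simp [hx])
  set TS : 𝓨 → ℝ := fun y => ∑ a, S a * P a y with hTS
  have hk : ∀ y x, 0 ≤ S x * P x y := fun y x => mul_nonneg (hS.1 x) ((hP x).1 y)
  have hTS0 : ∀ y, 0 ≤ TS y := fun y => Finset.sum_nonneg fun x _ => hk y x
  have hTS1 : ∑ y, TS y = 1 := by
    simp only [hTS]
    rw [Finset.sum_comm]
    simp only [← Finset.mul_sum, (hP _).2, mul_one, hS.2]
  have key : ∀ t : ℝ, 0 < t → t < 1 →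
      e ≤ ∑ x, S x * Real.log (((1 - t) * Q' x + t * S x) / Q x) := by
    intro t ht ht1
    have h1t : 0 < 1 - t := by linarith
    set J : 𝓨 → 𝓧 → ℝ := fun y x => (1 - t) * (T y * V y x) + t * (S x * P x y) with hJ
    set Tt : 𝓨 → ℝ := fun y => (1 - t) * T y + t * TS y with hTt
    set Vt : 𝓨 → 𝓧 → ℝ := fun y x => if Tt y = 0 then V y x else J y x / Tt y with hVt
    have hJ0 : ∀ y x, 0 ≤ J y x := fun y x =>
      add_nonneg (mul_nonneg h1t.le (hj y x)) (mul_nonneg ht.le (hk y x))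
    have hJT : ∀ y, ∑ x, J y x = Tt y := by
      intro y
      simp only [hJ, hTt, hTS, Finset.sum_add_distrib, ← Finset.mul_sum, (hV y).2, mul_one]
    have hTt0 : ∀ y, 0 ≤ Tt y := fun y => by
      rw [← hJT]; exact Finset.sum_nonneg fun x _ => hJ0 y x
    have hTtp : IsPMF Tt := by
      refine ⟨hTt0, ?_⟩
      simp only [hTt, Finset.sum_add_distrib, ← Finset.mul_sum, hT.2, hTS1]
      ring
    have hVtp : IsCondPMF Vt := by
      intro y
      by_cases hz : Tt y = 0
      · have : Vt y = V y := by funext x; simp [hVt, hz]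
        rw [this]; exact hV y
      · have : Vt y = fun x => J y x / Tt y := by funext x; simp [hVt, hz]
        rw [this]
        refine ⟨fun x => div_nonneg (hJ0 y x) (hTt0 y), ?_⟩
        rw [← Finset.sum_div, hJT, div_self hz]
    have hTV : (fun y x => Tt y * Vt y x) = J := by
      funext y x
      by_cases hz : Tt y = 0
      · have h := hJT y
        rw [hz] at h
        rw [hz, zero_mul,
          (Finset.sum_eq_zero_iff_of_nonneg fun x _ => hJ0 y x).1 h x (Finset.mem_univ _)]
      · simp only [hVt, if_neg hz]
        field_simp
    have hacJ : ∀ y x, Q x * P x y = 0 → Tt y * Vt y x = 0 := by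
      intro y x h0
      have h1 : S x * P x y = 0 := by
        rcases mul_eq_zero.1 h0 with h | h
        · simp [hSQ x h]
        · simp [h]
      have h2 : Tt y * Vt y x = J y x := congrFun (congrFun hTV y) x
      rw [h2]
      simp [hJ, hac y x h0, h1]
    have hge : e ≤ max (divR J Q P) (linR R Tt J P) := by
      have h := objective_eq R hVtp hacJ
      rw [hTV] at h
      rw [← EReal.coe_le_coe_iff, ← h]
      exact hmin.trans (sInf_le ⟨Tt, Vt, hTtp, hVtp, rfl⟩)
    have hBt : linR R Tt J P < e := by
      have h1 := linR_convex R (fun y x => T y * V y x) (fun y x => S x * P x y) P hT.1 hTS0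
        ht.le ht1.le
      rw [linR_channel R hP hS] at h1
      have h2 := mul_le_mul_of_nonneg_left hB h1t.le
      have h3 := mul_lt_mul_of_pos_left hMI ht
      have h4 : linR R Tt J P ≤ _ := h1
      linarith
    have hAt : e ≤ divR J Q P := (le_max_iff.1 hge).resolve_right (not_le.2 hBt)
    have h5 := divR_segment_le hP hS hQ' hj hm hac hSQ ht ht1
    have h6 := mul_le_mul_of_nonneg_left hA h1t.le
    have h7 : t * e ≤ t * ∑ x, S x * Real.log (((1 - t) * Q' x + t * S x) / Q x) := by
      have h8 := hAt.trans h5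
      linarith
    exact le_of_mul_le_mul_left h7 ht
  have hlim : Tendsto (fun t : ℝ => ∑ x, S x * Real.log (((1 - t) * Q' x + t * S x) / Q x))
      (𝓝[>] 0) (𝓝 (∑ x, S x * Real.log (Q' x / Q x))) := by
    refine tendsto_finsetSum _ fun x _ => ?_
    by_cases hz : S x = 0
    · simp [hz]
    · have hne : Q' x / Q x ≠ 0 := div_ne_zero (mt (hSQ' x) hz) (mt (hSQ x) hz)
      have hc : Tendsto (fun t : ℝ => ((1 - t) * Q' x + t * S x) / Q x) (𝓝 0)
          (𝓝 (Q' x / Q x)) := by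
        have : Continuous (fun t : ℝ => ((1 - t) * Q' x + t * S x) / Q x) := by fun_prop
        simpa using this.tendsto 0
      exact ((hc.log hne).const_mul _).mono_left nhdsWithin_le_nhds
  have hfin : e ≤ ∑ x, S x * Real.log (Q' x / Q x) := by
    refine ge_of_tendsto hlim ?_
    filter_upwards [Ioo_mem_nhdsGT (zero_lt_one (α := ℝ))] with t ht
    exact key t ht.1 ht.2
  refine hfin.trans (le_of_eq ?_)
  rw [← Finset.sum_sub_distrib]
  refine Finset.sum_congr rfl fun x _ => ?_
  by_cases hz : S x = 0
  · simp [hz]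
  · rw [Real.log_div (mt (hSQ' x) hz) (mt (hSQ x) hz)]
    ring

end

/-! ### Convergence of the recursion -/

theorem stmt_13 {𝓧 𝓨 : Type*} [Fintype 𝓧] [Fintype 𝓨] [Nonempty 𝓧] [Nonempty 𝓨]
    (P : 𝓧 → 𝓨 → ℝ) (hP : IsChannel P) (R : ℝ)
    (Qs : ℕ → 𝓧 → ℝ) (Ts : ℕ → 𝓨 → ℝ) (Vs : ℕ → 𝓨 → 𝓧 → ℝ)
    (hQ0 : IsPMF (Qs 0))
    (hTs : ∀ ℓ, IsPMF (Ts ℓ)) (hVs : ∀ ℓ, IsCondPMF (Vs ℓ))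
    (hmin : ∀ ℓ, DQP (Ts ℓ) (Vs ℓ) (Qs ℓ) P
      + max ((R : EReal) - DTQ (Ts ℓ) (Vs ℓ) (Qs ℓ)) 0 = EcML R (Qs ℓ) P)
    (hrec : ∀ ℓ x, Qs (ℓ + 1) x = ∑ y, Ts ℓ y * Vs ℓ y x)
    (hinit : EcML R (Qs 0) P
      < sInf {v | ∃ Q' : 𝓧 → ℝ, IsPMF Q' ∧ capacity P {x | 0 < Q' x} < R ∧
          v = EcML R Q' P}) :
    Antitone (fun ℓ => EcML R (Qs ℓ) P)
    ∧ Tendsto (fun ℓ => EcML R (Qs ℓ) P) atTop (𝓝 (0 : EReal)) := by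
  have hpmf : ∀ ℓ, IsPMF (Qs ℓ) := by
    intro ℓ
    cases ℓ with
    | zero => exact hQ0
    | succ n =>
      have h := (hTs n).marginal (hVs n)
      rwa [← funext (hrec n)] at h
  have hj : ∀ ℓ y x, 0 ≤ Ts ℓ y * Vs ℓ y x := fun ℓ y x =>
    mul_nonneg ((hTs ℓ).1 y) ((hVs ℓ y).1 x)
  have hac : ∀ ℓ, EcML R (Qs ℓ) P ≠ ⊤ →
      ∀ y x, Qs ℓ x * P x y = 0 → Ts ℓ y * Vs ℓ y x = 0 := by
    intro ℓ hne
    refine ac_of_DQP_ne_top (P := P) fun htop => hne ?_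
    rw [← hmin ℓ, htop]
    exact EReal.top_add_of_ne_bot
      (ne_of_gt (lt_of_lt_of_le EReal.bot_lt_zero (le_max_right _ _)))
  set e : ℕ → ℝ := fun ℓ => max (divR (fun y x => Ts ℓ y * Vs ℓ y x) (Qs ℓ) P)
    (linR R (Ts ℓ) (fun y x => Ts ℓ y * Vs ℓ y x) P) with he
  have hEe : ∀ ℓ, EcML R (Qs ℓ) P ≠ ⊤ → EcML R (Qs ℓ) P = (e ℓ : EReal) := fun ℓ hne => by
    rw [← hmin ℓ, objective_eq R (hVs ℓ) (hac ℓ hne)]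
  have hanti : Antitone (fun ℓ => EcML R (Qs ℓ) P) := by
    refine antitone_nat_of_succ_le fun ℓ => ?_
    by_cases hne : EcML R (Qs ℓ) P = ⊤
    · rw [hne]; exact le_top
    · have hac' : ∀ y x, Qs (ℓ + 1) x * P x y = 0 → Ts ℓ y * Vs ℓ y x = 0 := by
        intro y x h0
        rcases mul_eq_zero.1 h0 with h | h
        · rw [hrec] at h
          exact (Finset.sum_eq_zero_iff_of_nonneg fun y _ => hj ℓ y x).1 h y (Finset.mem_univ _)
        · exact hac ℓ hne y x (by simp [h])
      have h1 : EcML R (Qs (ℓ + 1)) P ≤ _ :=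
        sInf_le ⟨Ts ℓ, Vs ℓ, hTs ℓ, hVs ℓ, (objective_eq R (hVs ℓ) hac').symm⟩
      refine h1.trans ?_
      rw [hEe ℓ hne, EReal.coe_le_coe_iff]
      exact max_le_max (divR_marginal_le (hpmf ℓ) (hpmf (ℓ + 1)) (hj ℓ) (hrec ℓ) (hac ℓ hne))
        le_rfl
  refine ⟨hanti, ?_⟩
  have hfin : ∀ ℓ, EcML R (Qs ℓ) P ≠ ⊤ := fun ℓ =>
    ne_of_lt (lt_of_le_of_lt (hanti (Nat.zero_le ℓ)) (lt_of_lt_of_le hinit le_top))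
  have hE : ∀ ℓ, EcML R (Qs ℓ) P = (e ℓ : EReal) := fun ℓ => hEe ℓ (hfin ℓ)
  have he0 : ∀ ℓ, 0 ≤ e ℓ := fun ℓ => by
    refine le_max_of_le_left (divR_nonneg hP (hpmf ℓ) (hj ℓ) ?_ (hac ℓ (hfin ℓ)))
    simp only [← Finset.mul_sum, (hVs ℓ _).2, mul_one, (hTs ℓ).2]
  have heanti : Antitone e := fun m n hmn => by
    have := hanti hmn
    simp only [hE] at this
    exact EReal.coe_le_coe_iff.1 this
  suffices hsmall : ∀ ε > 0, ∃ ℓ, e ℓ < ε by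
    have h0 : Tendsto e atTop (𝓝 0) := by
      rw [Metric.tendsto_atTop]
      intro ε hε
      obtain ⟨N, hN⟩ := hsmall ε hε
      refine ⟨N, fun n hn => ?_⟩
      rw [Real.dist_eq, sub_zero, abs_of_nonneg (he0 n)]
      exact (heanti hn).trans_lt hN
    simp only [hE]
    exact (continuous_coe_real_ereal.tendsto (0 : ℝ)).comp h0
  intro ε hε
  by_contra! hlow
  have hzero : ∀ m n, m ≤ n → ∀ x, Qs m x = 0 → Qs n x = 0 := by
    intro m n hmn x hx
    induction n, hmn using Nat.le_induction with
    | base => exact hx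
    | succ n _ ih =>
      rw [hrec]
      exact Finset.sum_eq_zero fun y _ => hac n (hfin n) y x (by simp [ih])
  classical
  set Z : ℕ → Finset 𝓧 := fun ℓ => Finset.univ.filter fun x => Qs ℓ x ≠ 0 with hZ
  -- The supports decrease, so they equal `Z L` from a point `L` of minimal cardinality on.
  obtain ⟨L, hL⟩ : ∃ L, ∀ ℓ, (Z L).card ≤ (Z ℓ).card :=
    ⟨Function.argmin (fun ℓ => (Z ℓ).card), fun ℓ =>
      Function.argmin_le (fun ℓ => (Z ℓ).card) ℓ⟩
  have hstab : ∀ ℓ, L ≤ ℓ → Z ℓ = Z L := fun ℓ hℓ =>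
    Finset.eq_of_subset_of_card_le (fun x hx => by
      simp only [hZ, Finset.mem_filter, Finset.mem_univ, true_and] at hx ⊢
      exact fun h => hx (hzero L ℓ hℓ x h)) (hL ℓ)
  have hcap : R ≤ capacity P {x | 0 < Qs L x} := by
    by_contra! hlt
    have h1 := sInf_le (s := {v | ∃ Q' : 𝓧 → ℝ, IsPMF Q' ∧ capacity P {x | 0 < Q' x} < R ∧
      v = EcML R Q' P}) ⟨Qs L, hpmf L, hlt, rfl⟩
    exact absurd (hinit.trans_le h1) (not_lt.2 (hanti (Nat.zero_le L)))
  obtain ⟨_, ⟨S, hS, hSsupp, rfl⟩, hMI⟩ := exists_lt_of_lt_csSup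
    (s := {c | ∃ Q' : 𝓧 → ℝ, IsPMF Q' ∧ (∀ x, 0 < Q' x → x ∈ {x | 0 < Qs L x}) ∧ c = MI Q' P})
    ⟨MI (Qs L) P, Qs L, hpmf L, fun _ h => h, rfl⟩
    (show R - ε < capacity P {x | 0 < Qs L x} by linarith)
  have hSQ : ∀ ℓ, L ≤ ℓ → ∀ x, Qs ℓ x = 0 → S x = 0 := by
    intro ℓ hℓ x hx
    by_contra hne
    have h1 : 0 < Qs L x := hSsupp x (lt_of_le_of_ne (hS.1 x) (Ne.symm hne))
    have h2 : x ∈ Z ℓ := by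
      rw [hstab ℓ hℓ]
      simp [hZ, h1.ne']
    simp [hZ, hx] at h2
  set Φ : ℕ → ℝ := fun ℓ => ∑ x, S x * Real.log (Qs ℓ x) with hΦ
  have hstep : ∀ ℓ, L ≤ ℓ → ε ≤ Φ (ℓ + 1) - Φ ℓ := fun ℓ hℓ =>
    (hlow ℓ).trans (potential_step hP (hTs ℓ) (hVs ℓ) (hrec ℓ) (hac ℓ (hfin ℓ))
      (le_max_left _ _) (le_max_right _ _) (hE ℓ).ge hS (hSQ (ℓ + 1) (by omega))
      (by have := hlow ℓ; linarith))
  have hgrow : ∀ n : ℕ, Φ L + n * ε ≤ Φ (L + n) := by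
    intro n
    induction n with
    | zero => simp
    | succ n ih =>
      have h := hstep (L + n) (by omega)
      rw [← add_assoc]
      push_cast
      linarith
  have hΦ0 : ∀ ℓ, Φ ℓ ≤ 0 := fun ℓ => Finset.sum_nonpos fun x _ => by
    have h1 : Qs ℓ x ≤ 1 := by
      rw [← (hpmf ℓ).2]
      exact Finset.single_le_sum (fun x _ => (hpmf ℓ).1 x) (Finset.mem_univ x)
    exact mul_nonpos_of_nonneg_of_nonpos (hS.1 x) (Real.log_nonpos ((hpmf ℓ).1 x) h1)
  obtain ⟨n, hn⟩ := exists_nat_gt (-Φ L / ε)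
  rw [div_lt_iff₀ hε] at hn
  have h1 := hgrow n
  have h2 := hΦ0 (L + n)
  linarith
end

section
/- Fix ρ ∈ (−1,0) and a probability mass function Q₀ on 𝒳, and define the sequences T_ℓ, V_ℓ, Q_ℓ recursively by T_ℓ(y) = ( ∑_a Q_ℓ(a) P(y|a)^{1/(1+ρ)} )^{1+ρ} / ∑_{y'} ( ∑_a Q_ℓ(a) P(y'|a)^{1/(1+ρ)} )^{1+ρ}, V_ℓ(x|y) = Q_ℓ(x) P(y|x)^{1/(1+ρ)} / ∑_a Q_ℓ(a) P(y|a)^{1/(1+ρ)} for each y with T_ℓ(y) > 0, and Q_{ℓ+1}(x) = ∑_y T_ℓ(y) V_ℓ(x|y). Then F_ρ(T_ℓ∘V_ℓ, Q_ℓ) = E₀(ρ,Q_ℓ), and this non-increasing sequence converges, as ℓ → ∞, to the minimum of E₀(ρ,Q) over probability mass functions Q with supp(Q) ⊆ supp(Q₀). -/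
/-!
Write `g_Q(y) = ∑ₐ Q(a) P(y|a)^{1/(1+ρ)}` and `Φ(Q) = ∑_y g_Q(y)^{1+ρ}`, so that
`E₀(ρ,Q) = -log Φ(Q)`; let `J_Q = T_Q ∘ V_Q` be the joint law `Jrho`, with `𝓨`-marginal `T_Q`,
and let `Q⁺` be its `𝓧`-marginal, so that the recursion reads `Q_{ℓ+1} = Q_ℓ⁺`.

Everything rests on one pointwise identity (`log_identity`), valid where both laws are positive:
`(1+ρ) log (J_{Q'}/J_Q) - ρ log (T_{Q'}/T_Q) = (1+ρ) log (Q'/Q) + log (Φ(Q)/Φ(Q'))`.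
Both coefficients on the left are nonnegative because `ρ ∈ (-1,0)`.

* Monotonicity (`E0_upd_le`): take `Q' = Q⁺` and average under `J_Q`. By Gibbs' inequality the left
  side is nonpositive, and the right side becomes
  `(1+ρ) D(Q⁺‖Q) + E₀(Q⁺) - E₀(Q)`.
* Convergence (`E0_sub_le`): for a competitor `R` with `supp R ⊆ supp Q`, average the identity for
  the pair `(R, Q)` under `J_R`. The data-processing inequality `D(J_R‖J_Q) ≥ D(R⁺‖Q⁺)` and
  `D(R⁺‖R) ≥ 0` yield
  `E₀(Q) - E₀(R) ≤ (1+ρ) (D(R⁺‖Q) - D(R⁺‖Q⁺))`.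
  Summed along the iteration the right side telescopes to at most a constant `C`; as `E₀(Q_ℓ)` is
  non-increasing, `N (lim E₀(Q_ℓ) - E₀(R)) ≤ C` for all `N`, hence `lim E₀(Q_ℓ) ≤ E₀(R)`.

The supports of the `Q_ℓ` all coincide, so each `Q_ℓ` is itself a competitor and the limit is the
infimum.
-/

open scoped BigOperators
open Filter Topology

section Auxiliary

variable {𝓧 𝓨 : Type*} [Fintype 𝓧] [Fintype 𝓨]

/-! ### Gibbs' inequality -/

/-- Gibbs' inequality against a subprobability `r`. -/
lemma gibbs {ι : Type*} [Fintype ι] {p r : ι → ℝ} (hp : ∀ i, 0 ≤ p i) (hp1 : ∑ i, p i = 1)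
    (hr : ∀ i, 0 ≤ r i) (hr1 : ∑ i, r i ≤ 1) (hpr : ∀ i, 0 < p i → 0 < r i) :
    ∑ i, p i * (Real.log (r i) - Real.log (p i)) ≤ 0 := by
  have key : ∀ i, p i * (Real.log (r i) - Real.log (p i)) ≤ r i - p i := by
    intro i
    rcases (hp i).eq_or_lt with h | h
    · simpa [← h] using hr i
    · have hri := hpr i h
      rw [← Real.log_div hri.ne' h.ne']
      have h1 := Real.log_le_sub_one_of_pos (div_pos hri h)
      calc p i * Real.log (r i / p i) ≤ p i * (r i / p i - 1) :=
            mul_le_mul_of_nonneg_left h1 h.le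
        _ = r i - p i := by field_simp
  calc _ ≤ ∑ i, (r i - p i) := Finset.sum_le_sum fun i _ => key i
    _ ≤ 0 := by rw [Finset.sum_sub_distrib]; linarith

lemma gibbs₂ {p r : 𝓧 → 𝓨 → ℝ} (hp : ∀ x y, 0 ≤ p x y) (hp1 : ∑ x, ∑ y, p x y = 1)
    (hr : ∀ x y, 0 ≤ r x y) (hr1 : ∑ x, ∑ y, r x y ≤ 1) (hpr : ∀ x y, 0 < p x y → 0 < r x y) :
    ∑ x, ∑ y, p x y * (Real.log (r x y) - Real.log (p x y)) ≤ 0 := by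
  have := gibbs (p := fun i : 𝓧 × 𝓨 => p i.1 i.2) (r := fun i => r i.1 i.2)
    (fun i => hp _ _) (by rw [Fintype.sum_prod_type]; exact hp1) (fun i => hr _ _)
    (by rw [Fintype.sum_prod_type]; exact hr1) (fun i => hpr _ _)
  rwa [Fintype.sum_prod_type] at this

/-! ### The tilted joint law and its marginals -/

/-- The inner sum `g_Q(y) = ∑ₐ Q(a) P(y|a)^{1/(1+ρ)}` of Gallager's function. -/
noncomputable def gal (ρ : ℝ) (Q : 𝓧 → ℝ) (P : 𝓧 → 𝓨 → ℝ) (y : 𝓨) : ℝ :=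
  ∑ a, Q a * P a y ^ (1 / (1 + ρ))

/-- `Φ(Q) = ∑_y g_Q(y)^{1+ρ}`, so that `E₀(ρ,Q) = -log Φ(Q)`. -/
noncomputable def galSum (ρ : ℝ) (Q : 𝓧 → ℝ) (P : 𝓧 → 𝓨 → ℝ) : ℝ :=
  ∑ y, gal ρ Q P y ^ (1 + ρ)

/-- The `𝓨`-marginal `T_Q` of the tilted joint law `Jrho`. -/
noncomputable def tilt (ρ : ℝ) (Q : 𝓧 → ℝ) (P : 𝓧 → 𝓨 → ℝ) (y : 𝓨) : ℝ :=
  gal ρ Q P y ^ (1 + ρ) / galSum ρ Q P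

/-- One step `Q ↦ Q⁺` of the iteration: the `𝓧`-marginal of the tilted joint law `Jrho`. -/
noncomputable def upd (ρ : ℝ) (Q : 𝓧 → ℝ) (P : 𝓧 → 𝓨 → ℝ) (x : 𝓧) : ℝ :=
  ∑ y, Jrho ρ Q P x y

lemma E0_eq (ρ : ℝ) (Q : 𝓧 → ℝ) (P : 𝓧 → 𝓨 → ℝ) : E0 ρ Q P = -Real.log (galSum ρ Q P) := rfl

lemma Jrho_eq (ρ : ℝ) (Q : 𝓧 → ℝ) (P : 𝓧 → 𝓨 → ℝ) (x : 𝓧) (y : 𝓨) :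
    Jrho ρ Q P x y = Q x * P x y ^ (1 / (1 + ρ)) * gal ρ Q P y ^ ρ / galSum ρ Q P := rfl

variable {P : 𝓧 → 𝓨 → ℝ} {ρ : ℝ} {Q : 𝓧 → ℝ}

lemma IsPMF.exists_pos {α : Type*} [Fintype α] {f : α → ℝ} (hf : IsPMF f) : ∃ a, 0 < f a := by
  by_contra! h
  have := Finset.sum_nonpos (s := Finset.univ) fun a _ => h a
  linarith [hf.2]

lemma IsPMF.le_one {α : Type*} [Fintype α] {f : α → ℝ} (hf : IsPMF f) (a : α) : f a ≤ 1 :=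
  hf.2 ▸ Finset.single_le_sum (fun b _ => hf.1 b) (Finset.mem_univ a)

lemma gal_term_nonneg (hP : IsChannel P) (hQ : IsPMF Q) (x : 𝓧) (y : 𝓨) :
    0 ≤ Q x * P x y ^ (1 / (1 + ρ)) :=
  mul_nonneg (hQ.1 x) (Real.rpow_nonneg ((hP x).1 y) _)

lemma gal_nonneg (hP : IsChannel P) (hQ : IsPMF Q) (y : 𝓨) : 0 ≤ gal ρ Q P y :=
  Finset.sum_nonneg fun x _ => gal_term_nonneg hP hQ x y

lemma gal_pos (hP : IsChannel P) (hQ : IsPMF Q) {x : 𝓧} {y : 𝓨} (hx : 0 < Q x)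
    (hxy : 0 < P x y) : 0 < gal ρ Q P y :=
  Finset.sum_pos' (fun x _ => gal_term_nonneg hP hQ x y)
    ⟨x, Finset.mem_univ x, mul_pos hx (Real.rpow_pos_of_pos hxy _)⟩

lemma galSum_pos (hP : IsChannel P) (hQ : IsPMF Q) : 0 < galSum ρ Q P := by
  obtain ⟨x, hx⟩ := hQ.exists_pos
  obtain ⟨y, hy⟩ := (hP x).exists_pos
  exact Finset.sum_pos' (fun y _ => Real.rpow_nonneg (gal_nonneg hP hQ y) _)
    ⟨y, Finset.mem_univ y, Real.rpow_pos_of_pos (gal_pos hP hQ hx hy) _⟩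

lemma galSum_le_card (hP : IsChannel P) (hρ : ρ ∈ Set.Ioo (-1 : ℝ) 0) (hQ : IsPMF Q) :
    galSum ρ Q P ≤ Fintype.card 𝓨 := by
  have hs : 0 < 1 + ρ := by linarith [hρ.1]
  have h1 : ∀ y, gal ρ Q P y ^ (1 + ρ) ≤ 1 := fun y => by
    refine Real.rpow_le_one (gal_nonneg hP hQ y) ?_ hs.le
    calc gal ρ Q P y ≤ ∑ a, Q a := Finset.sum_le_sum fun a _ =>
          mul_le_of_le_one_right (hQ.1 a)
            (Real.rpow_le_one ((hP a).1 y) ((hP a).le_one y) (by positivity))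
      _ = 1 := hQ.2
  calc galSum ρ Q P ≤ ∑ _y : 𝓨, (1 : ℝ) := Finset.sum_le_sum fun y _ => h1 y
    _ = Fintype.card 𝓨 := by simp

lemma Jrho_nonneg (hP : IsChannel P) (hQ : IsPMF Q) (x : 𝓧) (y : 𝓨) : 0 ≤ Jrho ρ Q P x y :=
  div_nonneg (mul_nonneg (gal_term_nonneg hP hQ x y) (Real.rpow_nonneg (gal_nonneg hP hQ y) _))
    (galSum_pos hP hQ).le

lemma Jrho_pos (hP : IsChannel P) (hQ : IsPMF Q) {x : 𝓧} {y : 𝓨} (hx : 0 < Q x)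
    (hxy : 0 < P x y) : 0 < Jrho ρ Q P x y :=
  div_pos (mul_pos (mul_pos hx (Real.rpow_pos_of_pos hxy _))
    (Real.rpow_pos_of_pos (gal_pos hP hQ hx hxy) _)) (galSum_pos hP hQ)

lemma pos_of_Jrho_pos (hP : IsChannel P) (hρ : ρ ∈ Set.Ioo (-1 : ℝ) 0) (hQ : IsPMF Q) {x : 𝓧}
    {y : 𝓨} (h : 0 < Jrho ρ Q P x y) : 0 < Q x ∧ 0 < P x y := by
  have hs : 0 < 1 + ρ := by linarith [hρ.1]
  rw [Jrho_eq] at h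
  refine ⟨(hQ.1 x).lt_of_ne' fun h0 => ?_, ((hP x).1 y).lt_of_ne' fun h0 => ?_⟩
  · simp [h0] at h
  · rw [h0, Real.zero_rpow (by positivity)] at h
    simp at h

lemma sum_Jrho (hP : IsChannel P) (hρ : ρ ∈ Set.Ioo (-1 : ℝ) 0) (hQ : IsPMF Q) (y : 𝓨) :
    ∑ x, Jrho ρ Q P x y = tilt ρ Q P y := by
  have hs : 0 < 1 + ρ := by linarith [hρ.1]
  simp only [Jrho_eq]
  rw [← Finset.sum_div, ← Finset.sum_mul]
  change gal ρ Q P y * _ / _ = _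
  rw [tilt]
  congr 1
  rcases (gal_nonneg (ρ := ρ) hP hQ y).eq_or_lt with h | h
  · rw [← h, Real.zero_rpow hs.ne', zero_mul]
  · rw [Real.rpow_add h, Real.rpow_one]

lemma tilt_isPMF (hP : IsChannel P) (hQ : IsPMF Q) : IsPMF (tilt ρ Q P) := by
  refine ⟨fun y => div_nonneg (Real.rpow_nonneg (gal_nonneg hP hQ y) _) (galSum_pos hP hQ).le, ?_⟩
  simp only [tilt]
  rw [← Finset.sum_div]
  exact div_self (galSum_pos hP hQ).ne'

lemma sum_sum_Jrho (hP : IsChannel P) (hρ : ρ ∈ Set.Ioo (-1 : ℝ) 0) (hQ : IsPMF Q) :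
    ∑ x, ∑ y, Jrho ρ Q P x y = 1 := by
  rw [Finset.sum_comm]
  simp only [sum_Jrho hP hρ hQ]
  exact (tilt_isPMF hP hQ).2

lemma upd_isPMF (hP : IsChannel P) (hρ : ρ ∈ Set.Ioo (-1 : ℝ) 0) (hQ : IsPMF Q) :
    IsPMF (upd ρ Q P) :=
  ⟨fun x => Finset.sum_nonneg fun y _ => Jrho_nonneg hP hQ x y, sum_sum_Jrho hP hρ hQ⟩

/-- The iteration preserves the support. -/
lemma upd_pos_iff (hP : IsChannel P) (hρ : ρ ∈ Set.Ioo (-1 : ℝ) 0) (hQ : IsPMF Q) (x : 𝓧) :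
    0 < upd ρ Q P x ↔ 0 < Q x := by
  constructor
  · intro h
    obtain ⟨y, -, hy⟩ := Finset.exists_lt_of_sum_lt (s := Finset.univ) (f := fun _ : 𝓨 => (0 : ℝ))
      (g := fun y => Jrho ρ Q P x y) (by rw [Finset.sum_const_zero]; exact h)
    exact (pos_of_Jrho_pos hP hρ hQ hy).1
  · intro h
    obtain ⟨y, hy⟩ := (hP x).exists_pos
    exact Finset.sum_pos' (fun y _ => Jrho_nonneg hP hQ x y)
      ⟨y, Finset.mem_univ y, Jrho_pos hP hQ h hy⟩

lemma sum_Jrho_mul_left (f : 𝓧 → ℝ) :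
    ∑ x, ∑ y, Jrho ρ Q P x y * f x = ∑ x, upd ρ Q P x * f x := by
  simp only [upd, Finset.sum_mul]

lemma sum_Jrho_mul_right (hP : IsChannel P) (hρ : ρ ∈ Set.Ioo (-1 : ℝ) 0) (hQ : IsPMF Q)
    (f : 𝓨 → ℝ) : ∑ x, ∑ y, Jrho ρ Q P x y * f y = ∑ y, tilt ρ Q P y * f y := by
  rw [Finset.sum_comm]
  simp only [← Finset.sum_mul, sum_Jrho hP hρ hQ]

/-! ### The log-likelihood identity and the two descent inequalities -/

lemma tilt_pos (hP : IsChannel P) (hQ : IsPMF Q) {x : 𝓧} {y : 𝓨} (hx : 0 < Q x)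
    (hxy : 0 < P x y) : 0 < tilt ρ Q P y :=
  div_pos (Real.rpow_pos_of_pos (gal_pos hP hQ hx hxy) _) (galSum_pos hP hQ)

lemma log_Jrho (hP : IsChannel P) (hQ : IsPMF Q) {x : 𝓧} {y : 𝓨} (hx : 0 < Q x)
    (hxy : 0 < P x y) : Real.log (Jrho ρ Q P x y) =
      Real.log (Q x) + 1 / (1 + ρ) * Real.log (P x y) + ρ * Real.log (gal ρ Q P y)
        - Real.log (galSum ρ Q P) := by
  have hg := gal_pos (ρ := ρ) hP hQ hx hxy
  have hw : 0 < P x y ^ (1 / (1 + ρ)) := Real.rpow_pos_of_pos hxy _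
  have hgr : 0 < gal ρ Q P y ^ ρ := Real.rpow_pos_of_pos hg _
  rw [Jrho_eq, Real.log_div (by positivity) (galSum_pos hP hQ).ne',
    Real.log_mul (by positivity) hgr.ne', Real.log_mul hx.ne' hw.ne', Real.log_rpow hxy,
    Real.log_rpow hg]

lemma log_tilt (hP : IsChannel P) (hQ : IsPMF Q) {x : 𝓧} {y : 𝓨} (hx : 0 < Q x)
    (hxy : 0 < P x y) : Real.log (tilt ρ Q P y) =
      (1 + ρ) * Real.log (gal ρ Q P y) - Real.log (galSum ρ Q P) := by
  have hg := gal_pos (ρ := ρ) hP hQ hx hxy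
  rw [tilt, Real.log_div (Real.rpow_pos_of_pos hg _).ne' (galSum_pos hP hQ).ne',
    Real.log_rpow hg]

/-- `(1+ρ) log (J_{Q'}/J_Q) - ρ log (T_{Q'}/T_Q) = (1+ρ) log (Q'/Q) + log (Φ(Q)/Φ(Q'))`: the
dependence on `P` and on `g_Q(y)` cancels. -/
lemma log_identity {Q' : 𝓧 → ℝ} (hP : IsChannel P) (hQ : IsPMF Q) (hQ' : IsPMF Q')
    {x : 𝓧} {y : 𝓨} (hx : 0 < Q x) (hx' : 0 < Q' x) (hxy : 0 < P x y) :
    (1 + ρ) * (Real.log (Jrho ρ Q' P x y) - Real.log (Jrho ρ Q P x y))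
      + (-ρ) * (Real.log (tilt ρ Q' P y) - Real.log (tilt ρ Q P y))
      = (1 + ρ) * (Real.log (Q' x) - Real.log (Q x)) + (E0 ρ Q' P - E0 ρ Q P) := by
  rw [log_Jrho hP hQ hx hxy, log_Jrho hP hQ' hx' hxy, log_tilt hP hQ hx hxy,
    log_tilt hP hQ' hx' hxy, E0_eq, E0_eq]
  ring

lemma tilt_gibbs {Q' : 𝓧 → ℝ} (hP : IsChannel P) (hρ : ρ ∈ Set.Ioo (-1 : ℝ) 0) (hQ : IsPMF Q)
    (hQ' : IsPMF Q') (hsupp : ∀ x, 0 < Q x → 0 < Q' x) :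
    ∑ y, tilt ρ Q P y * (Real.log (tilt ρ Q' P y) - Real.log (tilt ρ Q P y)) ≤ 0 := by
  refine gibbs (tilt_isPMF hP hQ).1 (tilt_isPMF hP hQ).2 (tilt_isPMF hP hQ').1
    (tilt_isPMF hP hQ').2.le fun y hy => ?_
  rw [← sum_Jrho hP hρ hQ] at hy
  obtain ⟨x, -, hx⟩ := Finset.exists_lt_of_sum_lt (s := Finset.univ)
    (f := fun _ : 𝓧 => (0 : ℝ)) (g := fun x => Jrho ρ Q P x y) (by simpa using hy)
  obtain ⟨h1, h2⟩ := pos_of_Jrho_pos hP hρ hQ hx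
  exact tilt_pos hP hQ' (hsupp x h1) h2

lemma E0_upd_le (hP : IsChannel P) (hρ : ρ ∈ Set.Ioo (-1 : ℝ) 0) (hQ : IsPMF Q) :
    E0 ρ (upd ρ Q P) P ≤ E0 ρ Q P := by
  have hs : 0 < 1 + ρ := by linarith [hρ.1]
  have hQ' := upd_isPMF hP hρ hQ
  have hsupp : ∀ x, 0 < Q x → 0 < upd ρ Q P x := fun x => (upd_pos_iff hP hρ hQ x).2
  set Q' := upd ρ Q P with hQ'def
  have hA : ∑ x, ∑ y, Jrho ρ Q P x y *
      (Real.log (Jrho ρ Q' P x y) - Real.log (Jrho ρ Q P x y)) ≤ 0 :=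
    gibbs₂ (fun x y => Jrho_nonneg hP hQ x y) (sum_sum_Jrho hP hρ hQ)
      (fun x y => Jrho_nonneg hP hQ' x y) (sum_sum_Jrho hP hρ hQ').le fun x y h => by
        obtain ⟨h1, h2⟩ := pos_of_Jrho_pos hP hρ hQ h
        exact Jrho_pos hP hQ' (hsupp x h1) h2
  have hB := tilt_gibbs hP hρ hQ hQ' hsupp
  have hC : ∑ x, Q' x * (Real.log (Q x) - Real.log (Q' x)) ≤ 0 :=
    gibbs hQ'.1 hQ'.2 hQ.1 hQ.2.le fun x h => (upd_pos_iff hP hρ hQ x).1 h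
  rw [← sum_Jrho_mul_right hP hρ hQ] at hB
  rw [hQ'def, ← sum_Jrho_mul_left, ← hQ'def] at hC
  have key : ∀ x y, Jrho ρ Q P x y * (E0 ρ Q' P - E0 ρ Q P) =
      (1 + ρ) * (Jrho ρ Q P x y * (Real.log (Jrho ρ Q' P x y) - Real.log (Jrho ρ Q P x y)))
      + (-ρ) * (Jrho ρ Q P x y * (Real.log (tilt ρ Q' P y) - Real.log (tilt ρ Q P y)))
      + (1 + ρ) * (Jrho ρ Q P x y * (Real.log (Q x) - Real.log (Q' x))) := by
    intro x y
    rcases (Jrho_nonneg (ρ := ρ) hP hQ x y).eq_or_lt with h | h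
    · simp [← h]
    · obtain ⟨h1, h2⟩ := pos_of_Jrho_pos hP hρ hQ h
      linear_combination (-Jrho ρ Q P x y) *
        log_identity (ρ := ρ) hP hQ hQ' h1 (hsupp x h1) h2
  have hsum : E0 ρ Q' P - E0 ρ Q P = ∑ x, ∑ y, Jrho ρ Q P x y * (E0 ρ Q' P - E0 ρ Q P) := by
    simp only [← Finset.sum_mul]
    rw [sum_sum_Jrho hP hρ hQ, one_mul]
  simp only [key, Finset.sum_add_distrib, ← Finset.mul_sum] at hsum
  have h1 := mul_nonpos_of_nonneg_of_nonpos hs.le hA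
  have h2 := mul_nonpos_of_nonneg_of_nonpos (neg_nonneg.2 hρ.2.le) hB
  have h3 := mul_nonpos_of_nonneg_of_nonpos hs.le hC
  linarith

/-- The five-point-type inequality `E₀(Q) - E₀(R) ≤ (1+ρ) (D(R⁺‖Q) - D(R⁺‖Q⁺))`. -/
lemma E0_sub_le {R : 𝓧 → ℝ} (hP : IsChannel P) (hρ : ρ ∈ Set.Ioo (-1 : ℝ) 0) (hQ : IsPMF Q)
    (hR : IsPMF R) (hsupp : ∀ x, 0 < R x → 0 < Q x) :
    E0 ρ Q P - E0 ρ R P ≤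
      (1 + ρ) * ∑ x, upd ρ R P x * (Real.log (upd ρ Q P x) - Real.log (Q x)) := by
  have hs : 0 < 1 + ρ := by linarith [hρ.1]
  have hQ' := upd_isPMF hP hρ hQ
  have hR' := upd_isPMF hP hρ hR
  -- Gibbs against `R⁺(x) J_Q(x,y) / Q⁺(x)` is the data-processing bound `D(R⁺‖Q⁺) ≤ D(J_R‖J_Q)`.
  have hA : ∑ x, ∑ y, Jrho ρ R P x y *
      (Real.log (upd ρ R P x * Jrho ρ Q P x y / upd ρ Q P x) - Real.log (Jrho ρ R P x y)) ≤ 0 := by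
    refine gibbs₂ (r := fun x y => upd ρ R P x * Jrho ρ Q P x y / upd ρ Q P x)
      (fun x y => Jrho_nonneg hP hR x y) (sum_sum_Jrho hP hρ hR)
      (fun x y => div_nonneg (mul_nonneg (hR'.1 x) (Jrho_nonneg hP hQ x y)) (hQ'.1 x)) ?_ ?_
    · rw [← hR'.2]
      refine Finset.sum_le_sum fun x _ => ?_
      rw [← Finset.sum_div, ← Finset.mul_sum]
      change upd ρ R P x * upd ρ Q P x / upd ρ Q P x ≤ _
      exact div_le_of_le_mul₀ (hQ'.1 x) (hR'.1 x) le_rfl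
    · intro x y h
      obtain ⟨h1, h2⟩ := pos_of_Jrho_pos hP hρ hR h
      exact div_pos (mul_pos ((upd_pos_iff hP hρ hR x).2 h1) (Jrho_pos hP hQ (hsupp x h1) h2))
        ((upd_pos_iff hP hρ hQ x).2 (hsupp x h1))
  have hB := tilt_gibbs hP hρ hR hQ hsupp
  have hC : ∑ x, upd ρ R P x * (Real.log (R x) - Real.log (upd ρ R P x)) ≤ 0 :=
    gibbs hR'.1 hR'.2 hR.1 hR.2.le fun x h => (upd_pos_iff hP hρ hR x).1 h
  rw [← sum_Jrho_mul_right hP hρ hR] at hB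
  rw [← sum_Jrho_mul_left] at hC
  rw [← sum_Jrho_mul_left (f := fun x => Real.log (upd ρ Q P x) - Real.log (Q x))]
  have key : ∀ x y, Jrho ρ R P x y * (E0 ρ Q P - E0 ρ R P) =
      (1 + ρ) * (Jrho ρ R P x y *
        (Real.log (upd ρ R P x * Jrho ρ Q P x y / upd ρ Q P x) - Real.log (Jrho ρ R P x y)))
      + (-ρ) * (Jrho ρ R P x y * (Real.log (tilt ρ Q P y) - Real.log (tilt ρ R P y)))
      + (1 + ρ) * (Jrho ρ R P x y * (Real.log (R x) - Real.log (upd ρ R P x)))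
      + (1 + ρ) * (Jrho ρ R P x y * (Real.log (upd ρ Q P x) - Real.log (Q x))) := by
    intro x y
    rcases (Jrho_nonneg (ρ := ρ) hP hR x y).eq_or_lt with h | h
    · simp [← h]
    · obtain ⟨h1, h2⟩ := pos_of_Jrho_pos hP hρ hR h
      have h3 := hsupp x h1
      have h4 := (upd_pos_iff hP hρ hR x).2 h1
      have h5 := Jrho_pos (ρ := ρ) hP hQ h3 h2
      rw [Real.log_div (mul_pos h4 h5).ne' ((upd_pos_iff hP hρ hQ x).2 h3).ne',
        Real.log_mul h4.ne' h5.ne']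
      linear_combination (-Jrho ρ R P x y) * log_identity (ρ := ρ) hP hR hQ h1 h3 h2
  have hsum : E0 ρ Q P - E0 ρ R P = ∑ x, ∑ y, Jrho ρ R P x y * (E0 ρ Q P - E0 ρ R P) := by
    simp only [← Finset.sum_mul]
    rw [sum_sum_Jrho hP hρ hR, one_mul]
  simp only [key, Finset.sum_add_distrib, ← Finset.mul_sum] at hsum
  have h1 := mul_nonpos_of_nonneg_of_nonpos hs.le hA
  have h2 := mul_nonpos_of_nonneg_of_nonpos (neg_nonneg.2 hρ.2.le) hB
  have h3 := mul_nonpos_of_nonneg_of_nonpos hs.le hC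
  linarith

/-! ### The value of `F_ρ` at the tilted law -/

lemma klTerm_coe {s t : ℝ} (h : s ≠ 0 → t ≠ 0) :
    klTerm s t = ((s * Real.log (s / t) : ℝ) : EReal) := by
  unfold klTerm
  split_ifs with h1 h2
  · simp [h1]
  · exact absurd h2 (h h1)
  · rfl

lemma coe_sum_sum (f : 𝓨 → 𝓧 → ℝ) :
    ∑ y, ∑ x, ((f y x : ℝ) : EReal) = ((∑ y, ∑ x, f y x : ℝ) : EReal) := by
  let c : ℝ →+ EReal := ⟨⟨fun r : ℝ => (r : EReal), EReal.coe_zero⟩, EReal.coe_add⟩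
  change ∑ y, ∑ x, c (f y x) = c (∑ y, ∑ x, f y x)
  simp only [map_sum]

lemma Frho_eq_E0 {T : 𝓨 → ℝ} {V : 𝓨 → 𝓧 → ℝ} (hP : IsChannel P)
    (hρ : ρ ∈ Set.Ioo (-1 : ℝ) 0) (hQ : IsPMF Q) (hT : ∀ y, T y = tilt ρ Q P y)
    (hTV : ∀ x y, T y * V y x = Jrho ρ Q P x y) :
    Frho ρ T V Q P = ((E0 ρ Q P : ℝ) : EReal) := by
  have hs : 0 < 1 + ρ := by linarith [hρ.1]
  have hpos : ∀ {x y}, Jrho ρ Q P x y ≠ 0 → 0 < Q x ∧ 0 < P x y := fun {x y} h =>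
    pos_of_Jrho_pos hP hρ hQ ((Jrho_nonneg hP hQ x y).lt_of_ne' h)
  have h1 : DQP T V Q P = ((∑ y, ∑ x, Jrho ρ Q P x y *
      Real.log (Jrho ρ Q P x y / (Q x * P x y)) : ℝ) : EReal) := by
    rw [DQP, ← coe_sum_sum]
    refine Finset.sum_congr rfl fun y _ => Finset.sum_congr rfl fun x _ => ?_
    rw [hTV, klTerm_coe fun h => (mul_pos (hpos h).1 (hpos h).2).ne']
  have h2 : DTQ T V Q = ((∑ y, ∑ x, Jrho ρ Q P x y *
      Real.log (Jrho ρ Q P x y / (tilt ρ Q P y * Q x)) : ℝ) : EReal) := by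
    rw [DTQ, ← coe_sum_sum]
    refine Finset.sum_congr rfl fun y _ => Finset.sum_congr rfl fun x _ => ?_
    rw [hTV, hT, klTerm_coe fun h =>
      (mul_pos (tilt_pos hP hQ (hpos h).1 (hpos h).2) (hpos h).1).ne']
  rw [Frho, h1, h2, ← EReal.coe_mul, ← EReal.coe_add, EReal.coe_eq_coe_iff, Finset.mul_sum,
    ← Finset.sum_add_distrib]
  have key : ∀ y x, Jrho ρ Q P x y * Real.log (Jrho ρ Q P x y / (Q x * P x y)) +
      ρ * (Jrho ρ Q P x y * Real.log (Jrho ρ Q P x y / (tilt ρ Q P y * Q x)))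
      = Jrho ρ Q P x y * E0 ρ Q P := by
    intro y x
    rcases eq_or_ne (Jrho ρ Q P x y) 0 with h | h
    · simp [h]
    · obtain ⟨hx, hxy⟩ := hpos h
      have ht := tilt_pos (ρ := ρ) hP hQ hx hxy
      rw [Real.log_div h (mul_pos hx hxy).ne', Real.log_div h (mul_pos ht hx).ne',
        Real.log_mul hx.ne' hxy.ne', Real.log_mul ht.ne' hx.ne', log_Jrho hP hQ hx hxy,
        log_tilt hP hQ hx hxy, E0_eq]
      field_simp
      ring
  simp only [Finset.mul_sum, ← Finset.sum_add_distrib, key]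
  rw [Finset.sum_comm]
  simp only [← Finset.sum_mul]
  rw [sum_sum_Jrho hP hρ hQ, one_mul]

end Auxiliary

theorem stmt_19 {𝓧 𝓨 : Type*} [Fintype 𝓧] [Fintype 𝓨] [Nonempty 𝓧] [Nonempty 𝓨]
    (P : 𝓧 → 𝓨 → ℝ) (hP : IsChannel P)
    (ρ : ℝ) (hρ : ρ ∈ Set.Ioo (-1 : ℝ) 0)
    (Qs : ℕ → 𝓧 → ℝ) (Ts : ℕ → 𝓨 → ℝ) (Vs : ℕ → 𝓨 → 𝓧 → ℝ)
    (hQ0 : IsPMF (Qs 0))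
    (hVpmf : ∀ ℓ, IsCondPMF (Vs ℓ))
    (hT : ∀ ℓ y, Ts ℓ y
      = (∑ a, Qs ℓ a * P a y ^ (1 / (1 + ρ))) ^ (1 + ρ) /
          ∑ y', (∑ a, Qs ℓ a * P a y' ^ (1 / (1 + ρ))) ^ (1 + ρ))
    (hV : ∀ ℓ y, 0 < Ts ℓ y → ∀ x,
      Vs ℓ y x = Qs ℓ x * P x y ^ (1 / (1 + ρ)) / ∑ a, Qs ℓ a * P a y ^ (1 / (1 + ρ)))
    (hrec : ∀ ℓ x, Qs (ℓ + 1) x = ∑ y, Ts ℓ y * Vs ℓ y x) :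
    (∀ ℓ, Frho ρ (Ts ℓ) (Vs ℓ) (Qs ℓ) P = ((E0 ρ (Qs ℓ) P : ℝ) : EReal))
    ∧ Antitone (fun ℓ => E0 ρ (Qs ℓ) P)
    ∧ Tendsto (fun ℓ => E0 ρ (Qs ℓ) P) atTop
        (𝓝 (sInf {e : ℝ | ∃ Q' : 𝓧 → ℝ, IsPMF Q' ∧ (∀ x, 0 < Q' x → 0 < Qs 0 x) ∧
          e = E0 ρ Q' P})) := by
  have hTt : ∀ ℓ y, Ts ℓ y = tilt ρ (Qs ℓ) P y := hT
  have hTV : ∀ ℓ, IsPMF (Qs ℓ) → ∀ x y, Ts ℓ y * Vs ℓ y x = Jrho ρ (Qs ℓ) P x y := by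
    intro ℓ hQ x y
    have hs : 0 < 1 + ρ := by linarith [hρ.1]
    have hΦ := galSum_pos (ρ := ρ) hP hQ
    rcases (gal_nonneg (ρ := ρ) hP hQ y).eq_or_lt with h | h
    · -- Here `T(y) = 0`, and `g(y) = 0` forces its summand `Q(x) P(y|x)^{1/(1+ρ)}` to vanish.
      have h0 : Qs ℓ x * P x y ^ (1 / (1 + ρ)) = 0 :=
        (Finset.sum_eq_zero_iff_of_nonneg fun a _ => gal_term_nonneg hP hQ a y).1 h.symm x
          (Finset.mem_univ x)
      rw [hTt, tilt, ← h, Real.zero_rpow hs.ne', Jrho_eq, h0]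
      simp
    · have hTpos : 0 < Ts ℓ y := by
        rw [hTt]
        exact div_pos (Real.rpow_pos_of_pos h _) hΦ
      have hVy : Vs ℓ y x = Qs ℓ x * P x y ^ (1 / (1 + ρ)) / gal ρ (Qs ℓ) P y := hV ℓ y hTpos x
      rw [hVy, hTt, tilt, Jrho_eq, Real.rpow_add h, Real.rpow_one]
      field_simp
  have hstep : ∀ ℓ, IsPMF (Qs ℓ) → Qs (ℓ + 1) = upd ρ (Qs ℓ) P := fun ℓ hQ => by
    funext x
    rw [hrec, upd]
    exact Finset.sum_congr rfl fun y _ => hTV ℓ hQ x y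
  have hQ : ∀ ℓ, IsPMF (Qs ℓ) := by
    intro ℓ
    induction ℓ with
    | zero => exact hQ0
    | succ k ih => exact hstep k ih ▸ upd_isPMF hP hρ ih
  have hsupp : ∀ ℓ x, 0 < Qs ℓ x ↔ 0 < Qs 0 x := by
    intro ℓ x
    induction ℓ with
    | zero => rfl
    | succ k ih => rw [hstep k (hQ k), upd_pos_iff hP hρ (hQ k), ih]
  have hanti : Antitone (fun ℓ => E0 ρ (Qs ℓ) P) := antitone_nat_of_succ_le fun ℓ => by
    rw [hstep ℓ (hQ ℓ)]
    exact E0_upd_le hP hρ (hQ ℓ)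
  refine ⟨fun ℓ => Frho_eq_E0 hP hρ (hQ ℓ) (hTt ℓ) (hTV ℓ (hQ ℓ)), hanti, ?_⟩
  have hlow : ∀ Q : 𝓧 → ℝ, IsPMF Q → -Real.log (Fintype.card 𝓨) ≤ E0 ρ Q P := fun Q h => by
    rw [E0_eq]
    exact neg_le_neg (Real.log_le_log (galSum_pos hP h) (galSum_le_card hP hρ h))
  have hbdd : BddBelow (Set.range fun ℓ => E0 ρ (Qs ℓ) P) :=
    ⟨_, by rintro _ ⟨ℓ, rfl⟩; exact hlow _ (hQ ℓ)⟩
  convert tendsto_atTop_ciInf hanti hbdd using 2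
  refine le_antisymm (le_ciInf fun ℓ => csInf_le ?_ ⟨Qs ℓ, hQ ℓ, fun x => (hsupp ℓ x).1, rfl⟩)
    (le_csInf ⟨_, Qs 0, hQ 0, fun _ h => h, rfl⟩ ?_)
  · exact ⟨-Real.log (Fintype.card 𝓨), by rintro _ ⟨R, hR, -, rfl⟩; exact hlow R hR⟩
  rintro _ ⟨R, hR, hRs, rfl⟩
  set m := ⨅ ℓ, E0 ρ (Qs ℓ) P with hm
  have hR' := upd_isPMF hP hρ hR
  -- The cross-entropies `ℓ ↦ ∑ R⁺ log Q_ℓ` telescope and stay nonpositive.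
  set u : ℕ → ℝ := fun ℓ => ∑ x, upd ρ R P x * Real.log (Qs ℓ x) with hu
  have hinc : ∀ ℓ, m - E0 ρ R P ≤ (1 + ρ) * (u (ℓ + 1) - u ℓ) := by
    intro ℓ
    have h1 := E0_sub_le hP hρ (hQ ℓ) hR fun x h => (hsupp ℓ x).2 (hRs x h)
    have h2 : m ≤ E0 ρ (Qs ℓ) P := ciInf_le hbdd ℓ
    rw [← hstep ℓ (hQ ℓ)] at h1
    simp only [mul_sub, Finset.sum_sub_distrib] at h1
    simp only [hu]
    linarith
  have hbound : ∀ N : ℕ, N * (m - E0 ρ R P) ≤ (1 + ρ) * (-u 0) := by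
    intro N
    have hs : 0 < 1 + ρ := by linarith [hρ.1]
    have h1 : ∑ _ℓ ∈ Finset.range N, (m - E0 ρ R P) ≤
        ∑ ℓ ∈ Finset.range N, (1 + ρ) * (u (ℓ + 1) - u ℓ) :=
      Finset.sum_le_sum fun ℓ _ => hinc ℓ
    rw [← Finset.mul_sum, Finset.sum_range_sub] at h1
    have h2 : u N ≤ 0 := Finset.sum_nonpos fun x _ =>
      mul_nonpos_of_nonneg_of_nonpos (hR'.1 x)
        (Real.log_nonpos ((hQ N).1 x) ((hQ N).le_one x))
    simp only [Finset.sum_const, Finset.card_range, nsmul_eq_mul] at h1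
    nlinarith
  by_contra! hlt
  obtain ⟨N, hN⟩ := exists_nat_gt ((1 + ρ) * (-u 0) / (m - E0 ρ R P))
  rw [div_lt_iff₀ (sub_pos.2 hlt)] at hN
  exact absurd (hbound N) (not_le.2 hN)
end
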